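/- Every maximal Sidon set in F_2^4 has cardinality 6, and is the image under some affine permutation of the set {0, e_1, e_2, e_3, e_4, e_1+e_2+e_3+e_4}, where e_1,...,e_4 is the standard basis of F_2^4. -/

import Mathlib

/-- A subset `M` of `𝔽₂ᵗ` is Sidon if `m₁+m₂ ≠ m₃+m₄` for pairwise distinct elements. -/
def IsSidon {t : ℕ} (M : Finset (Fin t → ZMod 2)) : Prop :=
  ∀ m₁ ∈ M, ∀ m₂ ∈ M, ∀ m₃ ∈ M, ∀ m₄ ∈ M,
    (m₁ ≠ m₂ ∧ m₁ ≠ m₃ ∧ m₁ ≠ m₄ ∧ m₂ ≠ m₃ ∧ m₂ ≠ m₄ ∧ m₃ ≠ m₄) →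
    m₁ + m₂ ≠ m₃ + m₄

/-- `M` is sum-free if `m₁+m₂ ≠ m₃` for all `m₁,m₂,m₃ ∈ M`. -/
def IsSumFree {t : ℕ} (M : Finset (Fin t → ZMod 2)) : Prop :=
  ∀ m₁ ∈ M, ∀ m₂ ∈ M, ∀ m₃ ∈ M, m₁ + m₂ ≠ m₃

/-- A maximal Sidon set. -/
def IsMaximalSidon {t : ℕ} (M : Finset (Fin t → ZMod 2)) : Prop :=
  IsSidon M ∧ ∀ S : Finset (Fin t → ZMod 2), IsSidon S → M ⊆ S → S = M

/-- Maximum size of a Sidon set in `𝔽₂ᵗ`. -/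
noncomputable def sMax (t : ℕ) : ℕ :=
  sSup {n : ℕ | ∃ M : Finset (Fin t → ZMod 2), IsSidon M ∧ M.card = n}

/-- 2-sums of `M`. -/
def twoSums {t : ℕ} (M : Finset (Fin t → ZMod 2)) : Finset (Fin t → ZMod 2) :=
  (M ×ˢ M).image fun p => p.1 + p.2

/-- 2-star-sums of `M` (sums of two distinct elements). -/
def twoStarSums {t : ℕ} (M : Finset (Fin t → ZMod 2)) : Finset (Fin t → ZMod 2) :=
  ((M ×ˢ M).filter fun p => p.1 ≠ p.2).image fun p => p.1 + p.2

/-- 3-sums of `M`. -/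
def threeSums {t : ℕ} (M : Finset (Fin t → ZMod 2)) : Finset (Fin t → ZMod 2) :=
  ((M ×ˢ M) ×ˢ M).image fun p => p.1.1 + p.1.2 + p.2

/-- 3-star-sums of `M` (sums of three pairwise distinct elements). -/
def threeStarSums {t : ℕ} (M : Finset (Fin t → ZMod 2)) : Finset (Fin t → ZMod 2) :=
  (((M ×ˢ M) ×ˢ M).filter fun p => p.1.1 ≠ p.1.2 ∧ p.1.1 ≠ p.2 ∧ p.1.2 ≠ p.2).image
    fun p => p.1.1 + p.1.2 + p.2

/-- 4-sums of `M`. -/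
def fourSums {t : ℕ} (M : Finset (Fin t → ZMod 2)) : Finset (Fin t → ZMod 2) :=
  (((M ×ˢ M) ×ˢ M) ×ˢ M).image fun p => p.1.1.1 + p.1.1.2 + p.1.2 + p.2

/-- The standard basis vectors of `𝔽₂ᵗ`. -/
def stdBasis {t : ℕ} (i : Fin t) : Fin t → ZMod 2 := Pi.single i 1

/-!
Write `3*M` for the set of sums of three distinct elements of `M`. In characteristic two, `M` is
Sidon iff `3*M` is disjoint from `M`, and maximal Sidon iff `3*M` is exactly the complement of `M`.
Consequently affine permutations preserve maximality, and a maximal Sidon set spans the whole affine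
space, because `a + b + c = (a - b) + c` is an affine combination. So `M` contains an affine frame,
which an affine permutation moves to `P = {0, e₁, …, e_t}`.

For `t = 4` put `Q = P ∪ {e₁ + e₂ + e₃ + e₄}`. Then `3*P = 3*Q = Qᶜ`. From `P ⊆ M` we get
`Qᶜ = 3*P ⊆ 3*M = Mᶜ`, i.e. `M ⊆ Q`, and then `Mᶜ = 3*M ⊆ 3*Q = Qᶜ`, i.e. `Q ⊆ M`.
-/

section CharTwo

variable {V W : Type*} [AddCommGroup V] [Module (ZMod 2) V] [AddCommGroup W] [Module (ZMod 2) W]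

lemma add_eq_add_iff_eq_add_add {a b c d : V} : a + b = c + d ↔ a = b + c + d := by
  rw [← eq_sub_iff_add_eq, ZModModule.sub_eq_add, add_comm (c + d), add_assoc]

lemma add_add_eq_vsub_vadd (a b c : V) : a + b + c = (a -ᵥ b) +ᵥ c := by
  rw [vsub_eq_sub, vadd_eq_add, ZModModule.sub_eq_add]

lemma affineMap_map_add_add (f : V →ᵃ[ZMod 2] W) (a b c : V) :
    f (a + b + c) = f a + f b + f c := by
  rw [add_add_eq_vsub_vadd, add_add_eq_vsub_vadd, f.map_vadd, f.linearMap_vsub]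

lemma affineSubspace_add_add_mem (S : AffineSubspace (ZMod 2) V) {a b c : V}
    (ha : a ∈ S) (hb : b ∈ S) (hc : c ∈ S) : a + b + c ∈ S := by
  rw [add_add_eq_vsub_vadd]
  exact AffineSubspace.vadd_mem_of_mem_direction (AffineSubspace.vsub_mem_direction ha hb) hc

end CharTwo

section ThreeStarSums

variable {t : ℕ} {M N : Finset (Fin t → ZMod 2)} {x : Fin t → ZMod 2}

lemma mem_threeStarSums : x ∈ threeStarSums M ↔
    ∃ a ∈ M, ∃ b ∈ M, ∃ c ∈ M, (a ≠ b ∧ a ≠ c ∧ b ≠ c) ∧ a + b + c = x := by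
  simp only [threeStarSums, Finset.mem_image, Finset.mem_filter, Finset.mem_product, Prod.exists]
  grind

lemma threeStarSums_mono (h : M ⊆ N) : threeStarSums M ⊆ threeStarSums N := by
  intro x hx
  obtain ⟨a, ha, b, hb, c, hc, hne, rfl⟩ := mem_threeStarSums.1 hx
  exact mem_threeStarSums.2 ⟨a, h ha, b, h hb, c, h hc, hne, rfl⟩

lemma threeStarSums_image {s : ℕ} {f : (Fin t → ZMod 2) →ᵃ[ZMod 2] (Fin s → ZMod 2)}
    (hf : Function.Injective f) : threeStarSums (M.image f) = (threeStarSums M).image f := by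
  ext x
  constructor
  · intro hx
    simp only [mem_threeStarSums, Finset.exists_mem_image, hf.ne_iff] at hx
    obtain ⟨a, ha, b, hb, c, hc, hne, rfl⟩ := hx
    rw [← affineMap_map_add_add]
    exact Finset.mem_image_of_mem f (mem_threeStarSums.2 ⟨a, ha, b, hb, c, hc, hne, rfl⟩)
  · intro hx
    obtain ⟨y, hy, rfl⟩ := Finset.mem_image.1 hx
    obtain ⟨a, ha, b, hb, c, hc, hne, rfl⟩ := mem_threeStarSums.1 hy
    simp only [mem_threeStarSums, Finset.exists_mem_image, hf.ne_iff]
    exact ⟨a, ha, b, hb, c, hc, hne, (affineMap_map_add_add f a b c).symm⟩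

end ThreeStarSums

section MaximalSidon

variable {t : ℕ} {M : Finset (Fin t → ZMod 2)}

lemma isSidon_iff_disjoint_threeStarSums : IsSidon M ↔ Disjoint M (threeStarSums M) := by
  rw [Finset.disjoint_left]
  constructor
  · intro hM x hx hx_sum
    obtain ⟨a, ha, b, hb, c, hc, ⟨hab, hac, hbc⟩, rfl⟩ := mem_threeStarSums.1 hx_sum
    -- If `a + b + c` were one of its summands, the other two summands would be equal.
    refine hM _ hx a ha b hb c hc ⟨?_, ?_, ?_, hab, hac, hbc⟩ (add_eq_add_iff_eq_add_add.2 rfl)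
    · rwa [ne_eq, add_assoc, add_eq_left, ← ZModModule.sub_eq_add, sub_eq_zero]
    · rwa [ne_eq, add_right_comm, add_eq_right, ← ZModModule.sub_eq_add, sub_eq_zero]
    · rwa [ne_eq, add_eq_right, ← ZModModule.sub_eq_add, sub_eq_zero]
  · intro hM a ha b hb c hc d hd ⟨_, _, _, hbc, hbd, hcd⟩ h
    exact hM ha <| mem_threeStarSums.2
      ⟨b, hb, c, hc, d, hd, ⟨hbc, hbd, hcd⟩, (add_eq_add_iff_eq_add_add.1 h).symm⟩

lemma IsSidon.insert {x : Fin t → ZMod 2} (hM : IsSidon M) (hx : x ∉ threeStarSums M) :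
    IsSidon (insert x M) := by
  have hx_ne : ∀ a ∈ M, ∀ b ∈ M, ∀ c ∈ M, a ≠ b ∧ a ≠ c ∧ b ≠ c → x + a ≠ b + c :=
    fun a ha b hb c hc hne h ↦ hx <| mem_threeStarSums.2
      ⟨a, ha, b, hb, c, hc, hne, (add_eq_add_iff_eq_add_add.1 h).symm⟩
  intro a ha b hb c hc d hd hne
  have hM_ne := hM a
  -- At most one of `a, b, c, d` is `x`; by symmetry of the relation we may assume that it is `a`.
  grind [add_comm]

lemma isMaximalSidon_iff_threeStarSums_eq_compl :
    IsMaximalSidon M ↔ threeStarSums M = Mᶜ := by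
  constructor
  · rintro ⟨hM, hmax⟩
    refine (isSidon_iff_disjoint_threeStarSums.1 hM).symm.le_compl_right.antisymm fun x hx ↦ ?_
    by_contra hx_sum
    have h_insert : insert x M = M := hmax _ (hM.insert hx_sum) (Finset.subset_insert x M)
    exact Finset.mem_compl.1 hx (Finset.insert_eq_self.1 h_insert)
  · intro hM
    refine ⟨isSidon_iff_disjoint_threeStarSums.2 (hM ▸ disjoint_compl_right), fun S hS hMS ↦ ?_⟩
    have h_compl : Mᶜ ⊆ Sᶜ :=
      calc Mᶜ = threeStarSums M := hM.symm
        _ ⊆ threeStarSums S := threeStarSums_mono hMS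
        _ ⊆ Sᶜ := (isSidon_iff_disjoint_threeStarSums.1 hS).symm.le_compl_right
    exact (Finset.compl_subset_compl.1 h_compl).antisymm hMS

lemma IsMaximalSidon.image {s : ℕ} (hM : IsMaximalSidon M)
    (T : (Fin t → ZMod 2) ≃ᵃ[ZMod 2] (Fin s → ZMod 2)) : IsMaximalSidon (M.image T) := by
  rw [isMaximalSidon_iff_threeStarSums_eq_compl] at hM ⊢
  calc threeStarSums (M.image T) = (threeStarSums M).image T :=
        threeStarSums_image (f := T.toAffineMap) T.injective
    _ = Mᶜ.image T := by rw [hM]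
    _ = (M.image T)ᶜ := by
      rw [← Finset.coe_inj]
      push_cast
      exact Set.image_compl_eq T.bijective

lemma IsMaximalSidon.affineSpan_eq_top (hM : IsMaximalSidon M) :
    affineSpan (ZMod 2) (M : Set (Fin t → ZMod 2)) = ⊤ := by
  have h_sub : ∀ m ∈ M, m ∈ affineSpan (ZMod 2) (M : Set (Fin t → ZMod 2)) :=
    fun m hm ↦ subset_affineSpan _ _ hm
  refine eq_top_iff.2 fun x _ ↦ ?_
  by_cases hx : x ∈ M
  · exact h_sub x hx
  · rw [← Finset.mem_compl, ← isMaximalSidon_iff_threeStarSums_eq_compl.1 hM] at hx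
    obtain ⟨a, ha, b, hb, c, hc, -, rfl⟩ := mem_threeStarSums.1 hx
    exact affineSubspace_add_add_mem _ (h_sub a ha) (h_sub b hb) (h_sub c hc)

end MaximalSidon

section Frames

lemma exists_affineEquiv_zero_mem_basis_mem {k V P ι : Type*} [DivisionRing k] [AddCommGroup V]
    [Module k V] [AddTorsor V P] (e : Module.Basis ι k V) {s : Set P} (hs : affineSpan k s = ⊤) :
    ∃ T : V ≃ᵃ[k] P, T 0 ∈ s ∧ ∀ i, T (e i) ∈ s := by
  obtain ⟨a, ha⟩ : s.Nonempty := AffineSubspace.nonempty_of_affineSpan_eq_top k V P hs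
  have h_span : ⊤ ≤ Submodule.span k ((· -ᵥ a) '' s) := by
    rw [← vectorSpan_eq_span_vsub_set_right k ha,
      AffineSubspace.vectorSpan_eq_top_of_affineSpan_eq_top k V P hs]
  let b := Module.Basis.ofSpan h_span
  let L : V ≃ₗ[k] V := e.equiv b (e.indexEquiv b)
  refine ⟨L.toAffineEquiv.trans (AffineEquiv.vaddConst k a), by simpa using ha, fun i ↦ ?_⟩
  obtain ⟨p, hp, hp_eq⟩ : L (e i) ∈ (· -ᵥ a) '' s := by
    rw [e.equiv_apply]
    exact Module.Basis.ofSpan_subset h_span ⟨e.indexEquiv b i, rfl⟩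
  simpa [← hp_eq] using hp

/-- The standard affine frame `0, e₁, …, e_t` of `𝔽₂ᵗ`, to which any other affine frame can be moved
by an affine permutation. -/
def stdFrame (t : ℕ) : Finset (Fin t → ZMod 2) := insert 0 (Finset.univ.image stdBasis)

variable {t : ℕ} {M : Finset (Fin t → ZMod 2)}

lemma stdFrame_subset_iff : stdFrame t ⊆ M ↔ 0 ∈ M ∧ ∀ i, stdBasis i ∈ M := by
  simp [stdFrame, Finset.insert_subset_iff, Finset.image_subset_iff]

lemma IsMaximalSidon.exists_stdFrame_subset_image (hM : IsMaximalSidon M) :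
    ∃ T : (Fin t → ZMod 2) ≃ᵃ[ZMod 2] (Fin t → ZMod 2), stdFrame t ⊆ M.image T := by
  obtain ⟨T, hT_zero, hT_basis⟩ :=
    exists_affineEquiv_zero_mem_basis_mem (Pi.basisFun (ZMod 2) (Fin t)) hM.affineSpan_eq_top
  refine ⟨T.symm, stdFrame_subset_iff.2 ⟨?_, fun i ↦ ?_⟩⟩
  · exact Finset.mem_image.2 ⟨T 0, hT_zero, T.symm_apply_apply 0⟩
  · refine Finset.mem_image.2 ⟨T (stdBasis i), ?_, T.symm_apply_apply _⟩
    simpa [stdBasis] using hT_basis i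

end Frames

section DimensionFour

/-- The model maximal Sidon set of `𝔽₂⁴`: the standard affine frame together with the sum of its
points. It is spelled out point by point, as in `maximal_sidon_dim4`. -/
def stdHexad : Finset (Fin 4 → ZMod 2) :=
  {0, stdBasis 0, stdBasis 1, stdBasis 2, stdBasis 3,
    stdBasis 0 + stdBasis 1 + stdBasis 2 + stdBasis 3}

lemma card_stdHexad : stdHexad.card = 6 := by
  decide +kernel

-- The complement of `stdHexad` consists of the vectors `0 + eᵢ + eⱼ` of weight two and
-- `eᵢ + eⱼ + eₖ` of weight three.
lemma threeStarSums_stdFrame_four : threeStarSums (stdFrame 4) = stdHexadᶜ := by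
  decide +kernel

-- Sums that involve the all-ones vector `𝟙` are not new: `𝟙 + 0 + eᵢ` has weight three and
-- `𝟙 + eᵢ + eⱼ` has weight two.
lemma threeStarSums_stdHexad : threeStarSums stdHexad = stdHexadᶜ := by
  decide +kernel

lemma IsMaximalSidon.eq_stdHexad {M : Finset (Fin 4 → ZMod 2)} (hM : IsMaximalSidon M)
    (h_frame : stdFrame 4 ⊆ M) : M = stdHexad := by
  rw [isMaximalSidon_iff_threeStarSums_eq_compl] at hM
  have h_le : M ⊆ stdHexad := by
    rw [← Finset.compl_subset_compl, ← threeStarSums_stdFrame_four, ← hM]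
    exact threeStarSums_mono h_frame
  have h_ge : stdHexad ⊆ M := by
    rw [← Finset.compl_subset_compl, ← threeStarSums_stdHexad, ← hM]
    exact threeStarSums_mono h_le
  exact h_le.antisymm h_ge

end DimensionFour

theorem maximal_sidon_dim4 (M : Finset (Fin 4 → ZMod 2)) (hM : IsMaximalSidon M) :
    M.card = 6 ∧
    ∃ (L : (Fin 4 → ZMod 2) ≃ₗ[ZMod 2] (Fin 4 → ZMod 2)) (a : Fin 4 → ZMod 2),
      Finset.image (fun x => L x + a)
        ({0, stdBasis 0, stdBasis 1, stdBasis 2, stdBasis 3,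
          stdBasis 0 + stdBasis 1 + stdBasis 2 + stdBasis 3} :
            Finset (Fin 4 → ZMod 2)) = M := by
  obtain ⟨T, h_frame⟩ := hM.exists_stdFrame_subset_image
  have h_image : M.image T = stdHexad := (hM.image T).eq_stdHexad h_frame
  have h_symm : stdHexad.image T.symm = M := by
    rw [← h_image, Finset.image_image, ← AffineEquiv.coe_trans, T.self_trans_symm,
      AffineEquiv.coe_refl, Finset.image_id]
  refine ⟨?_, T.symm.linear, T.symm 0, ?_⟩
  · rw [← card_stdHexad, ← h_image, Finset.card_image_of_injective M T.injective]
  · rw [← h_symm]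
    exact congrArg stdHexad.image T.symm.toAffineMap.decomp.symm
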